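/- Let (X,T) be a TDS with upper semi-continuous entropy map and h_top(T) < ∞, and Φ a subadditive potential with β(Φ) > -∞. For each t > 0 let μ_t be an equilibrium state for tΦ (i.e., h_{μ_t}(T) + t χ(μ_t,Φ) = P(t)). Then any weak-* accumulation point μ of (μ_t) as t → ∞ satisfies χ(μ,Φ) = β(Φ), i.e., μ is a Lyapunov maximizing measure. -/

import Mathlib

open MeasureTheory Filter Topology Set
open scoped ENNReal NNReal

/-- Positive part of an extended real, as an extended nonnegative real. -/
noncomputable def EReal.posPart (a : EReal) : ℝ≥0∞ :=
  if a = ⊤ then ⊤ else ENNReal.ofReal a.toReal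

/-- `EReal`-valued logarithm of a real number: `elog r = -∞` for `r ≤ 0`. -/
noncomputable def elog (r : ℝ) : EReal := ENNReal.log (ENNReal.ofReal r)

/-- The integral of an `EReal`-valued function, with values in `[-∞, ∞]`. -/
noncomputable def eint {X : Type*} [MeasurableSpace X] (μ : Measure X) (f : X → EReal) : EReal :=
  ((∫⁻ x, (f x).posPart ∂μ : ℝ≥0∞) : EReal) - ((∫⁻ x, (-f x).posPart ∂μ : ℝ≥0∞) : EReal)

/-- `Φ = {log φₙ}` is a subadditive potential for `T`: each `φₙ` is continuous,
nonnegative, and `φ_{n+m}(x) ≤ φₙ(x) · φₘ(Tⁿ x)`. -/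
def SubadditivePotential {X : Type*} [TopologicalSpace X] (T : X → X) (φ : ℕ → X → ℝ) : Prop :=
  (∀ n, 1 ≤ n → Continuous (φ n)) ∧ (∀ n x, 1 ≤ n → 0 ≤ φ n x) ∧
    (∀ m n : ℕ, 1 ≤ m → 1 ≤ n → ∀ x, φ (n + m) x ≤ φ n x * φ m (T^[n] x))



theorem lintegral_ofReal_ne_top {X : Type*} [MeasurableSpace X] {μ : Measure X} {F : X → ℝ}
    (hF : Integrable F μ) : (∫⁻ x, ENNReal.ofReal (F x) ∂μ) ≠ ⊤ :=
  ((lintegral_mono fun _ => Real.ofReal_le_enorm _).trans_lt hF.2).ne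

theorem EReal.posPart_mono {a b : EReal} (hab : a ≤ b) : a.posPart ≤ b.posPart := by
  unfold EReal.posPart
  by_cases hb : b = ⊤
  · simp [hb]
  have ha : a ≠ ⊤ := fun h => hb (top_le_iff.1 (h ▸ hab))
  rw [if_neg ha, if_neg hb]
  by_cases ha' : a = ⊥
  · simp [ha']
  exact ENNReal.ofReal_le_ofReal (EReal.toReal_le_toReal hab ha' hb)

theorem EReal.posPart_coe (r : ℝ) : (r : EReal).posPart = ENNReal.ofReal r := by
  simp [EReal.posPart]

theorem eint_coe {X : Type*} [MeasurableSpace X] (μ : Measure X) (F : X → ℝ)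
    (hF : Integrable F μ) : eint μ (fun x => (F x : EReal)) = ((∫ x, F x ∂μ : ℝ) : EReal) := by
  have h1 : (∫⁻ x, ENNReal.ofReal (F x) ∂μ) ≠ ⊤ := lintegral_ofReal_ne_top hF
  have h2 : (∫⁻ x, ENNReal.ofReal (-F x) ∂μ) ≠ ⊤ := lintegral_ofReal_ne_top hF.neg
  unfold eint
  rw [integral_eq_lintegral_pos_part_sub_lintegral_neg_part hF]
  simp only [← EReal.coe_neg, EReal.posPart_coe]
  rw [EReal.coe_sub, EReal.coe_ennreal_toReal h1, EReal.coe_ennreal_toReal h2]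

theorem eint_mono {X : Type*} [MeasurableSpace X] (μ : Measure X) {f g : X → EReal}
    (hfg : ∀ x, f x ≤ g x) : eint μ f ≤ eint μ g := by
  unfold eint
  apply EReal.sub_le_sub
  · exact_mod_cast lintegral_mono fun x => EReal.posPart_mono (hfg x)
  · exact_mod_cast lintegral_mono fun x => EReal.posPart_mono (EReal.neg_le_neg_iff.2 (hfg x))

theorem eint_le_of_le {X : Type*} [MeasurableSpace X] (μ : Measure X) {f : X → EReal} {F : X → ℝ}
    (hF : Integrable F μ) (hfF : ∀ x, f x ≤ F x) : eint μ f ≤ ((∫ x, F x ∂μ : ℝ) : EReal) :=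
  (eint_mono μ hfF).trans (eint_coe μ F hF).le

theorem elog_le_of_le_exp {r s : ℝ} (hrs : r ≤ Real.exp s) : elog r ≤ (s : EReal) := by
  unfold elog
  rw [ENNReal.log_ofReal]
  split_ifs with h0
  · exact bot_le
  · push Not at h0
    exact_mod_cast (Real.log_le_iff_le_exp h0).2 hrs

theorem posPart_elog {r : ℝ} (hr : 0 ≤ r) : (elog r).posPart = ENNReal.ofReal (Real.log r) := by
  unfold elog
  rw [ENNReal.log_ofReal]
  split_ifs with h0
  · have : r = 0 := le_antisymm h0 hr
    simp [this, EReal.posPart]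
  · exact EReal.posPart_coe _

theorem posPart_neg_elog {r : ℝ} (hr : 0 ≤ r) :
    (-elog r).posPart ≤
      ⨆ M : ℕ, ENNReal.ofReal (-Real.log (max r (Real.exp (-(M : ℝ))))) := by
  unfold elog
  rw [ENNReal.log_ofReal]
  split_ifs with h0
  · have : r = 0 := le_antisymm h0 hr
    subst this
    have : ∀ M : ℕ, max 0 (Real.exp (-(M : ℝ))) = Real.exp (-(M : ℝ)) := fun M =>
      max_eq_right (Real.exp_pos _).le
    simp only [this, Real.log_exp, neg_neg, ENNReal.ofReal_natCast]
    simp [ENNReal.iSup_natCast]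
  · push Not at h0
    rw [← EReal.coe_neg, EReal.posPart_coe]
    obtain ⟨M, hM⟩ := exists_nat_ge (-Real.log r)
    refine le_iSup_of_le M ?_
    rw [max_eq_left]
    rw [← Real.exp_log h0, Real.exp_le_exp]
    linarith

theorem le_eint_elog {X : Type*} [TopologicalSpace X] [CompactSpace X] [MeasurableSpace X]
    [BorelSpace X] (μ : Measure X) [IsProbabilityMeasure μ] {f : X → ℝ} (hf : Continuous f)
    (hf0 : ∀ x, 0 ≤ f x) (c : ℝ)
    (hc : ∀ ε : ℝ, 0 < ε → c ≤ ∫ x, Real.log (max (f x) ε) ∂μ) :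
    (c : EReal) ≤ eint μ (fun x => elog (f x)) := by
  have hcont : ∀ ε : ℝ, 0 < ε → Continuous fun x => Real.log (max (f x) ε) := fun ε hε =>
    (hf.max continuous_const).log fun x => (lt_max_of_lt_right hε).ne'
  have hIntg : ∀ ε : ℝ, 0 < ε → Integrable (fun x => Real.log (max (f x) ε)) μ := fun ε hε =>
    (hcont ε hε).integrable_of_hasCompactSupport (HasCompactSupport.of_compactSpace _)
  have hpos : ∀ (M : ℕ) (x : X), ENNReal.ofReal (Real.log (max (f x) (Real.exp (-(M : ℝ)))))
      = ENNReal.ofReal (Real.log (f x)) := by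
    intro M x
    rcases le_total (Real.exp (-(M : ℝ))) (f x) with h | h
    · rw [max_eq_left h]
    · rw [max_eq_right h, Real.log_exp, ENNReal.ofReal_of_nonpos (by simp),
        ENNReal.ofReal_of_nonpos]
      apply Real.log_nonpos (hf0 x)
      exact h.trans (Real.exp_le_one_iff.2 (by simp))
  unfold eint
  simp only [posPart_elog (hf0 _)]
  set A := ∫⁻ x, ENNReal.ofReal (Real.log (f x)) ∂μ with hA
  have hAtop : A ≠ ⊤ := by
    rw [hA]
    simp only [← hpos 0]
    exact lintegral_ofReal_ne_top (hIntg _ (Real.exp_pos _))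
  have hM : ∀ M : ℕ, ∫⁻ x, ENNReal.ofReal (-Real.log (max (f x) (Real.exp (-(M : ℝ))))) ∂μ
      ≤ ENNReal.ofReal (A.toReal - c) := by
    intro M
    have h1 := hc _ (Real.exp_pos (-(M : ℝ)))
    rw [integral_eq_lintegral_pos_part_sub_lintegral_neg_part (hIntg _ (Real.exp_pos _))] at h1
    simp only [hpos] at h1
    apply ENNReal.le_ofReal_iff_toReal_le _ _ |>.2
    · linarith
    · exact lintegral_ofReal_ne_top (hIntg _ (Real.exp_pos _)).neg
    · have := ENNReal.toReal_nonneg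
        (a := ∫⁻ x, ENNReal.ofReal (-Real.log (max (f x) (Real.exp (-(M : ℝ))))) ∂μ)
      linarith
  have hAc : 0 ≤ A.toReal - c := by
    have h1 := hc _ (Real.exp_pos (-((0 : ℕ) : ℝ)))
    rw [integral_eq_lintegral_pos_part_sub_lintegral_neg_part (hIntg _ (Real.exp_pos _))] at h1
    simp only [hpos] at h1
    have := ENNReal.toReal_nonneg
        (a := ∫⁻ x, ENNReal.ofReal (-Real.log (max (f x) (Real.exp (-((0 : ℕ) : ℝ))))) ∂μ)
    linarith
  have hB : ∫⁻ x, (-elog (f x)).posPart ∂μ ≤ ENNReal.ofReal (A.toReal - c) := by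
    refine (lintegral_mono fun x => posPart_neg_elog (hf0 x)).trans ?_
    rw [lintegral_iSup]
    · exact iSup_le hM
    · intro M
      exact (hcont _ (Real.exp_pos _)).measurable.neg.ennreal_ofReal
    · intro M N hMN x
      apply ENNReal.ofReal_le_ofReal
      apply neg_le_neg
      apply Real.log_le_log (lt_max_of_lt_right (Real.exp_pos _))
      apply max_le_max le_rfl
      apply Real.exp_le_exp.2
      have : (M : ℝ) ≤ N := by exact_mod_cast hMN
      linarith
  have hAe : ((A : ℝ≥0∞) : EReal) = ((A.toReal : ℝ) : EReal) :=
    (EReal.coe_ennreal_toReal hAtop).symm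
  calc (c : EReal) = ((A : ℝ≥0∞) : EReal) - ((ENNReal.ofReal (A.toReal - c) : ℝ≥0∞) : EReal) := by
        rw [hAe, EReal.coe_ennreal_ofReal, max_eq_left hAc, ← EReal.coe_sub]
        congr 1; ring
    _ ≤ _ := EReal.sub_le_sub le_rfl (by exact_mod_cast hB)

/-- Basic block estimate. -/
theorem block_bound {X : Type*} [TopologicalSpace X] {T : X → X} {φ : ℕ → X → ℝ}
    (hφ : SubadditivePotential T φ) {m : ℕ} (hm : 1 ≤ m) {g : X → ℝ}
    (hg : ∀ x, φ m x ≤ Real.exp (g x)) {r : ℕ} (hr : 1 ≤ r) {C : ℝ}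
    (hC : ∀ x, φ r x ≤ Real.exp C) (k : ℕ) :
    ∀ x, φ (k * m + r) x ≤ Real.exp (∑ i ∈ Finset.range k, g (T^[i * m] x) + C) := by
  induction k with
  | zero => intro x; simpa using hC x
  | succ k ih =>
    intro x
    have h1 := hφ.2.2 (k * m + r) m (by omega) hm x
    have e : (k + 1) * m + r = m + (k * m + r) := by ring
    rw [e]
    refine h1.trans ?_
    rw [Finset.sum_range_succ', add_right_comm, Real.exp_add, mul_comm (Real.exp _)]
    refine (mul_le_mul (hg x) (ih (T^[m] x)) (hφ.2.1 _ _ (by omega)) (Real.exp_pos _).le).trans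
      (le_of_eq ?_)
    simp only [zero_mul, Function.iterate_zero, id, ← Function.iterate_add_apply]
    simp only [add_mul, one_mul]

theorem exists_exp_bound {X : Type*} [TopologicalSpace X] [CompactSpace X] {f : X → ℝ}
    (hf : Continuous f) : ∃ C : ℝ, 0 ≤ C ∧ ∀ x, f x ≤ Real.exp C := by
  obtain ⟨B, hB⟩ := (isCompact_range hf).bddAbove
  refine ⟨max B 0, le_max_right _ _, fun x => ?_⟩
  have h1 : f x ≤ B := hB ⟨x, rfl⟩
  have h2 := Real.add_one_le_exp (max B 0)
  have h3 := le_max_left B 0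
  linarith

theorem integrable_of_cont {X : Type*} [TopologicalSpace X] [CompactSpace X] [MeasurableSpace X]
    [BorelSpace X] (μ : Measure X) [IsFiniteMeasure μ] {f : X → ℝ} (hf : Continuous f) :
    Integrable f μ :=
  hf.integrable_of_hasCompactSupport (HasCompactSupport.of_compactSpace _)

theorem trunc_cont {X : Type*} [TopologicalSpace X] {f : X → ℝ} (hf : Continuous f) {ε : ℝ}
    (hε : 0 < ε) : Continuous fun x => Real.log (max (f x) ε) :=
  (hf.max continuous_const).log fun _ => (lt_max_of_lt_right hε).ne'

theorem le_exp_trunc (r : ℝ) {ε : ℝ} (hε : 0 < ε) : r ≤ Real.exp (Real.log (max r ε)) := by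
  rw [Real.exp_log (lt_max_of_lt_right hε)]
  exact le_max_left _ _

theorem integral_iterate {X : Type*} [TopologicalSpace X] [MeasurableSpace X]
    [BorelSpace X] (μ : Measure X) {T : X → X} (hT : Continuous T) (hμ : Measure.map T μ = μ)
    {f : X → ℝ} (hf : Continuous f) (j : ℕ) : ∫ x, f (T^[j] x) ∂μ = ∫ x, f x ∂μ := by
  have hp : MeasurePreserving T μ μ := ⟨hT.measurable, hμ⟩
  have hj := hp.iterate j
  rw [← integral_map hj.measurable.aemeasurable, hj.map_eq]
  exact hf.measurable.aestronglyMeasurable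

theorem tendsto_ratio (a C : ℝ) {m : ℕ} (hm : 1 ≤ m) :
    Tendsto (fun k : ℕ => ((k : ℝ) * a + C) / ((k * m + m : ℕ) : ℝ)) atTop (𝓝 (a / m)) := by
  have hm0 : (m : ℝ) ≠ 0 := by positivity
  have h : ∀ k : ℕ, ((k : ℝ) * a + C) / ((k * m + m : ℕ) : ℝ)
      = a / m + ((C - a) / m) * (1 / ((k : ℝ) + 1)) := by
    intro k
    have : (k : ℝ) + 1 ≠ 0 := by positivity
    push_cast
    have e : (k : ℝ) * m + m = (k + 1) * m := by ring
    rw [e]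
    field_simp
    ring
  simp only [h]
  have := (tendsto_one_div_add_atTop_nhds_zero_nat (𝕜 := ℝ)).const_mul ((C - a) / m)
  simpa using this.const_add (a / m)

theorem chi_le {X : Type*} [TopologicalSpace X] [CompactSpace X] [MeasurableSpace X]
    [BorelSpace X] {T : X → X} (hT : Continuous T) {φ : ℕ → X → ℝ}
    (hφ : SubadditivePotential T φ) (μ : Measure X) [IsProbabilityMeasure μ]
    (hμ : Measure.map T μ = μ) {χ : EReal}
    (hχ : Tendsto (fun n : ℕ => eint μ (fun x => elog (φ n x)) / (n : EReal)) atTop (𝓝 χ))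
    {m : ℕ} (hm : 1 ≤ m) {ε : ℝ} (hε : 0 < ε) :
    χ ≤ (((∫ x, Real.log (max (φ m x) ε) ∂μ) / m : ℝ) : EReal) := by
  obtain ⟨C, -, hC⟩ := exists_exp_bound (hφ.1 m hm)
  have hgc := trunc_cont (hφ.1 m hm) hε
  set g : X → ℝ := fun x => Real.log (max (φ m x) ε) with hg
  have hlim : Tendsto (fun k : ℕ => k * m + m) atTop atTop := by
    refine tendsto_atTop_mono (fun k => ?_) tendsto_id
    simp only [id]
    nlinarith
  have h1 := hχ.comp hlim
  have h2 := EReal.tendsto_coe.2 (tendsto_ratio (∫ x, g x ∂μ) C hm)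
  refine le_of_tendsto_of_tendsto' h1 h2 fun k => ?_
  simp only [Function.comp]
  have hgi : ∀ i : ℕ, Continuous fun x => g (T^[i] x) := fun i => hgc.comp (hT.iterate i)
  have hb := block_bound hφ hm (g := g) (fun x => le_exp_trunc _ hε) hm hC k
  have hc : Continuous fun x => ∑ i ∈ Finset.range k, g (T^[i * m] x) + C :=
    (continuous_finset_sum _ fun i _ => hgi _).add continuous_const
  have h3 := eint_le_of_le μ (integrable_of_cont μ hc) (fun x => elog_le_of_le_exp (hb x))
  have h4 : ∫ x, (∑ i ∈ Finset.range k, g (T^[i * m] x) + C) ∂μ = k * ∫ x, g x ∂μ + C := by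
    rw [integral_add (integrable_of_cont μ (continuous_finset_sum _ fun i _ => hgi _))
      (integrable_const _), integral_finset_sum _ fun i _ => integrable_of_cont μ (hgi _)]
    simp only [integral_iterate μ hT hμ hgc]
    simp
  rw [h4] at h3
  rw [EReal.coe_div]
  exact EReal.div_le_div_right_of_nonneg (by exact_mod_cast Nat.zero_le _) h3

theorem le_chi {X : Type*} [TopologicalSpace X] [CompactSpace X] [MeasurableSpace X]
    [BorelSpace X] {T : X → X} {φ : ℕ → X → ℝ}
    (hφ : SubadditivePotential T φ) (μ : Measure X) [IsProbabilityMeasure μ] {χ : EReal}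
    (hχ : Tendsto (fun n : ℕ => eint μ (fun x => elog (φ n x)) / (n : EReal)) atTop (𝓝 χ))
    {b : ℝ} (hb : ∀ m : ℕ, 1 ≤ m → ∀ ε : ℝ, 0 < ε →
      m * b ≤ ∫ x, Real.log (max (φ m x) ε) ∂μ) : (b : EReal) ≤ χ := by
  refine ge_of_tendsto hχ ?_
  filter_upwards [eventually_ge_atTop 1] with n hn
  have h1 := le_eint_elog μ (hφ.1 n hn) (fun x => hφ.2.1 n x hn) (n * b) (hb n hn)
  have hn0 : (n : ℝ) ≠ 0 := by positivity
  calc (b : EReal) = ((n * b : ℝ) : EReal) / (n : EReal) := by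
        rw [show (n : EReal) = ((n : ℝ) : EReal) from rfl, ← EReal.coe_div]
        congr 1
        field_simp
    _ ≤ _ := EReal.div_le_div_right_of_nonneg (by exact_mod_cast Nat.zero_le _) h1

theorem sum_range_mul_aux (f : ℕ → ℝ) (m k : ℕ) :
    ∑ j ∈ Finset.range m, ∑ i ∈ Finset.range k, f (i * m + j) = ∑ l ∈ Finset.range (k * m), f l := by
  rw [Finset.sum_comm]
  induction k with
  | zero => simp
  | succ k ih => rw [Finset.sum_range_succ, ih, add_mul, one_mul, Finset.sum_range_add]

theorem averaging {X : Type*} [TopologicalSpace X] {T : X → X} {φ : ℕ → X → ℝ}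
    (hφ : SubadditivePotential T φ) {m : ℕ} (hm : 1 ≤ m) {g : X → ℝ}
    (hg : ∀ x, φ m x ≤ Real.exp (g x)) {C : ℝ} (hC0 : 0 ≤ C)
    (hC : ∀ r, 1 ≤ r → r < 2 * m → ∀ x, φ r x ≤ Real.exp C) (hgC : ∀ x, -C ≤ g x)
    {n : ℕ} (hn : m ≤ n) {x : X} (hx : 0 < φ n x) :
    m * Real.log (φ n x) ≤ ∑ l ∈ Finset.range n, g (T^[l] x) + 4 * m * C := by
  obtain ⟨k, hk1, hk2⟩ : ∃ k, k * m + m ≤ n ∧ n < k * m + 2 * m := by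
    refine ⟨n / m - 1, ?_, ?_⟩
    · have h1 := Nat.div_mul_le_self n m
      have h2 : 1 ≤ n / m := (Nat.one_le_div_iff hm).2 hn
      have h3 : (n / m - 1) * m + m = (n / m) * m := by
        rw [← Nat.succ_mul]; congr 1; omega
      omega
    · have h1 := Nat.lt_div_mul_add (a := n) (b := m) hm
      have h2 : 1 ≤ n / m := (Nat.one_le_div_iff hm).2 hn
      have h3 : (n / m - 1) * m + m = (n / m) * m := by
        rw [← Nat.succ_mul]; congr 1; omega
      omega
  have key : ∀ j ∈ Finset.range m,
      Real.log (φ n x) ≤ ∑ i ∈ Finset.range k, g (T^[i * m + j] x) + 2 * C := by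
    intro j hj
    have hj := Finset.mem_range.1 hj
    rw [Real.log_le_iff_le_exp hx]
    have hr1 : 1 ≤ n - j - k * m := by omega
    have hb := block_bound hφ hm hg hr1 (hC _ hr1 (by omega)) k (T^[j] x)
    simp only [← Function.iterate_add_apply] at hb
    rcases Nat.eq_zero_or_pos j with rfl | hj0
    · have e : k * m + (n - 0 - k * m) = n := by omega
      rw [e] at hb
      refine hb.trans (Real.exp_le_exp.2 (by linarith))
    · have e : n = j + (k * m + (n - j - k * m)) := by omega
      have h1 := hφ.2.2 (k * m + (n - j - k * m)) j (by omega) hj0 x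
      rw [← e] at h1
      refine h1.trans ((mul_le_mul (hC j hj0 (by omega) x) hb (hφ.2.1 _ _ (by omega))
        (Real.exp_pos _).le).trans ?_)
      rw [← Real.exp_add]
      exact Real.exp_le_exp.2 (by linarith)
  have h1 := Finset.sum_le_sum key
  rw [Finset.sum_add_distrib, sum_range_mul_aux (fun l => g (T^[l] x))] at h1
  simp only [Finset.sum_const, Finset.card_range, nsmul_eq_mul] at h1
  have e : n = k * m + (n - k * m) := by omega
  have h2 : ∑ l ∈ Finset.range n, g (T^[l] x) = ∑ l ∈ Finset.range (k * m), g (T^[l] x)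
      + ∑ l ∈ Finset.range (n - k * m), g (T^[k * m + l] x) := by
    conv_lhs => rw [e]
    rw [Finset.sum_range_add]
  have h3 := Finset.card_nsmul_le_sum (Finset.range (n - k * m))
    (fun l => g (T^[k * m + l] x)) (-C) (fun l _ => hgC _)
  rw [Finset.card_range, nsmul_eq_mul] at h3
  have h4 : ((n - k * m : ℕ) : ℝ) ≤ 2 * m := by
    have : n - k * m ≤ 2 * m := by omega
    exact_mod_cast this
  have h5 := mul_le_mul_of_nonneg_right h4 hC0
  rw [h2]
  linarith

/-- Empirical measures. -/
noncomputable def empMeas {X : Type*} [MeasurableSpace X] (T : X → X) (n : ℕ) (x : X) :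
    Measure X :=
  ((n + 1 : ℕ) : ℝ≥0∞)⁻¹ • ∑ l ∈ Finset.range (n + 1), Measure.dirac (T^[l] x)

theorem empMeas_prob {X : Type*} [MeasurableSpace X] (T : X → X) (n : ℕ) (x : X) :
    IsProbabilityMeasure (empMeas T n x) := by
  constructor
  simp only [empMeas, Measure.smul_apply, Measure.finset_sum_apply, measure_univ,
    Finset.sum_const, Finset.card_range, smul_eq_mul, nsmul_eq_mul, mul_one]
  exact ENNReal.inv_mul_cancel (by simp) (ENNReal.natCast_ne_top _)

theorem integral_empMeas {X : Type*} [TopologicalSpace X] [CompactSpace X] [MeasurableSpace X]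
    [BorelSpace X] (T : X → X) (n : ℕ) (x : X) {f : X → ℝ} (hf : Continuous f) :
    ∫ y, f y ∂(empMeas T n x) = (∑ l ∈ Finset.range (n + 1), f (T^[l] x)) / ((n + 1 : ℕ) : ℝ) := by
  unfold empMeas
  rw [integral_smul_measure, integral_finset_sum_measure fun i _ => integrable_of_cont _ hf]
  simp only [integral_dirac' _ _ hf.measurable.stronglyMeasurable]
  rw [ENNReal.toReal_inv, ENNReal.toReal_natCast, smul_eq_mul, div_eq_inv_mul]

theorem beta_real {X : Type*} [TopologicalSpace X] [CompactSpace X] [Nonempty X]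
    {T : X → X} {φ : ℕ → X → ℝ} (hφ : SubadditivePotential T φ) {β : EReal} (hβne : β ≠ ⊥)
    (hβ : Tendsto (fun n : ℕ => elog (⨆ x, φ n x) / (n : EReal)) atTop (𝓝 β)) :
    ∃ b : ℝ, β = b ∧ (∀ᶠ n in atTop, 0 < ⨆ x, φ n x) ∧
      Tendsto (fun n : ℕ => Real.log (⨆ x, φ n x) / n) atTop (𝓝 b) := by
  have htop : β ≠ ⊤ := by
    obtain ⟨C, -, hC⟩ := exists_exp_bound (hφ.1 1 le_rfl)
    have : β ≤ (C : EReal) := by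
      refine le_of_tendsto (hβ.comp (tendsto_add_atTop_nat 1)) (Eventually.of_forall fun k => ?_)
      have hb := block_bound hφ le_rfl (g := fun _ => C) hC le_rfl hC k
      simp only [Finset.sum_const, Finset.card_range, nsmul_eq_mul, mul_one] at hb
      have h1 := elog_le_of_le_exp (ciSup_le hb)
      simp only [Function.comp]
      calc _ ≤ ((k * C + C : ℝ) : EReal) / ((k + 1 : ℕ) : EReal) :=
            EReal.div_le_div_right_of_nonneg (by exact_mod_cast Nat.zero_le _) h1
        _ = C := by
            rw [show ((k + 1 : ℕ) : EReal) = (((k + 1 : ℕ) : ℝ) : EReal) from rfl,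
              ← EReal.coe_div]
            congr 1
            have : ((k + 1 : ℕ) : ℝ) ≠ 0 := by positivity
            field_simp
            push_cast
            ring
    exact fun h => by simp [h] at this
  lift β to ℝ using ⟨htop, hβne⟩ with b
  have hpos : ∀ᶠ n : ℕ in atTop, 0 < ⨆ x, φ n x := by
    filter_upwards [hβ.eventually (lt_mem_nhds (EReal.bot_lt_coe b)), eventually_ge_atTop 1]
      with n hn hn1
    by_contra hle
    push Not at hle
    rw [elog, ENNReal.log_ofReal, if_pos hle, EReal.bot_div_of_pos_ne_top] at hn
    · exact lt_irrefl _ hn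
    · exact_mod_cast hn1
    · exact EReal.natCast_ne_top n
  refine ⟨b, rfl, hpos, EReal.tendsto_coe.1 (hβ.congr' ?_)⟩
  filter_upwards [hpos] with n hn
  rw [elog, ENNReal.log_ofReal_of_pos hn, EReal.coe_div]
  rfl

theorem exists_maximizing {X : Type*} [MetricSpace X] [CompactSpace X] [Nonempty X]
    [MeasurableSpace X] [BorelSpace X] {T : X → X} (hT : Continuous T) {φ : ℕ → X → ℝ}
    (hφ : SubadditivePotential T φ) {b : ℝ} (hpos : ∀ᶠ n in atTop, 0 < ⨆ x, φ n x)
    (hb : Tendsto (fun n : ℕ => Real.log (⨆ x, φ n x) / n) atTop (𝓝 b)) :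
    ∃ ν : ProbabilityMeasure X, Measure.map T (ν : Measure X) = (ν : Measure X) ∧
      ∀ m : ℕ, 1 ≤ m → ∀ ε : ℝ, 0 < ε → m * b ≤ ∫ x, Real.log (max (φ m x) ε) ∂(ν : Measure X) := by
  have hx : ∀ n : ℕ, ∃ x, φ (n + 1) x = ⨆ y, φ (n + 1) y := by
    intro n
    obtain ⟨x, hx⟩ := (isCompact_range (hφ.1 (n + 1) (by omega))).sSup_mem (range_nonempty _)
    exact ⟨x, hx⟩
  choose x hx using hx
  let e : ℕ → ProbabilityMeasure X := fun n => ⟨empMeas T n (x n), empMeas_prob T n (x n)⟩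
  have hU : ((hyperfilter ℕ : Ultrafilter ℕ) : Filter ℕ) ≤ atTop := Nat.hyperfilter_le_atTop
  obtain ⟨ν, -, hν⟩ := isCompact_univ.ultrafilter_le_nhds ((hyperfilter ℕ).map e) (by simp)
  have hν : Tendsto e (hyperfilter ℕ : Ultrafilter ℕ) (𝓝 ν) := hν
  have hIntg : ∀ f : X → ℝ, Continuous f → Tendsto
      (fun n => (∑ l ∈ Finset.range (n + 1), f (T^[l] (x n))) / ((n + 1 : ℕ) : ℝ))
      (hyperfilter ℕ : Ultrafilter ℕ) (𝓝 (∫ y, f y ∂(ν : Measure X))) := by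
    intro f hf
    have h1 := ProbabilityMeasure.tendsto_iff_forall_integral_tendsto.1 hν
      (BoundedContinuousFunction.mkOfCompact ⟨f, hf⟩)
    refine h1.congr fun n => ?_
    exact integral_empMeas T n (x n) hf
  have hinv : ∀ K : ℝ, Tendsto (fun n : ℕ => K / ((n + 1 : ℕ) : ℝ))
      (hyperfilter ℕ : Ultrafilter ℕ) (𝓝 0) := fun K =>
    ((tendsto_const_div_atTop_nhds_zero_nat K).comp (tendsto_add_atTop_nat 1)).mono_left hU
  refine ⟨ν, ?_, ?_⟩
  · have : IsProbabilityMeasure (Measure.map T (ν : Measure X)) :=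
      Measure.isProbabilityMeasure_map hT.measurable.aemeasurable
    refine ext_of_forall_integral_eq_of_IsFiniteMeasure fun f => ?_
    rw [integral_map hT.measurable.aemeasurable f.continuous.measurable.aestronglyMeasurable]
    have h1 := (hIntg (fun y => f (T y)) (f.continuous.comp hT)).sub (hIntg f f.continuous)
    have h2 : Tendsto (fun n => (∑ l ∈ Finset.range (n + 1), f (T (T^[l] (x n)))) / ((n + 1 : ℕ) : ℝ)
        - (∑ l ∈ Finset.range (n + 1), f (T^[l] (x n))) / ((n + 1 : ℕ) : ℝ))
        (hyperfilter ℕ : Ultrafilter ℕ) (𝓝 0) := by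
      refine squeeze_zero_norm (fun n => ?_) (hinv (2 * ‖f‖))
      rw [← sub_div, norm_div, ← Finset.sum_sub_distrib]
      simp only [← Function.iterate_succ_apply']
      rw [Finset.sum_range_sub (fun l => f (T^[l] (x n)))]
      rw [Real.norm_natCast]
      gcongr
      refine (norm_sub_le _ _).trans ?_
      have := f.norm_coe_le_norm (T^[n + 1] (x n))
      have := f.norm_coe_le_norm (T^[0] (x n))
      linarith
    exact sub_eq_zero.1 (tendsto_nhds_unique h1 h2)
  · intro m hm ε hε
    have hgc := trunc_cont (hφ.1 m hm) hε
    set g : X → ℝ := fun x => Real.log (max (φ m x) ε) with hg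
    have hCr : ∀ r : ℕ, ∃ C : ℝ, 0 ≤ C ∧ (1 ≤ r → ∀ x, φ r x ≤ Real.exp C) := by
      intro r
      by_cases hr : 1 ≤ r
      · obtain ⟨C, h0, hC⟩ := exists_exp_bound (hφ.1 r hr)
        exact ⟨C, h0, fun _ => hC⟩
      · exact ⟨0, le_rfl, fun h => absurd h hr⟩
    choose c hc0 hc using hCr
    set C : ℝ := ∑ r ∈ Finset.range (2 * m), c r + |Real.log ε| with hCdef
    have hsum0 : 0 ≤ ∑ r ∈ Finset.range (2 * m), c r := Finset.sum_nonneg fun r _ => hc0 r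
    have hC0 : 0 ≤ C := add_nonneg hsum0 (abs_nonneg _)
    have hC : ∀ r, 1 ≤ r → r < 2 * m → ∀ x, φ r x ≤ Real.exp C := by
      intro r hr1 hr2 x
      refine (hc r hr1 x).trans (Real.exp_le_exp.2 ?_)
      have := Finset.single_le_sum (fun r _ => hc0 r) (Finset.mem_range.2 hr2)
      have := abs_nonneg (Real.log ε)
      linarith
    have hgC : ∀ x, -C ≤ g x := by
      intro x
      have h1 : Real.log ε ≤ g x := Real.log_le_log hε (le_max_right _ _)
      have h2 := neg_abs_le (Real.log ε)
      linarith
    have h1 : Tendsto (fun n : ℕ => m * (Real.log (⨆ x, φ (n + 1) x) / ((n + 1 : ℕ) : ℝ)))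
        (hyperfilter ℕ : Ultrafilter ℕ) (𝓝 (m * b)) :=
      ((hb.comp (tendsto_add_atTop_nat 1)).const_mul (m : ℝ)).mono_left hU
    have h2 := (hIntg g hgc).add (hinv (4 * m * C))
    rw [add_zero] at h2
    refine le_of_tendsto_of_tendsto h1 h2 ?_
    have hev : ∀ᶠ n : ℕ in atTop, 0 < ⨆ x, φ (n + 1) x :=
      (tendsto_add_atTop_nat 1).eventually hpos
    filter_upwards [hU hev, hU (eventually_ge_atTop m)] with n hn hnm
    rw [← hx n] at hn ⊢
    have h3 := averaging hφ hm (fun x => le_exp_trunc (φ m x) hε) hC0 hC hgC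
      (Nat.le_succ_of_le hnm) hn
    rw [← mul_div_assoc, ← add_div]
    exact div_le_div_of_nonneg_right h3 (Nat.cast_nonneg _)

/-- any weak-* accumulation point of equilibrium states (μ_t) for tΦ as
t → ∞ is a Lyapunov maximizing measure: χ(μ,Φ) = β(Φ). -/
theorem accumulation_point_of_equilibrium_states_is_maximizing
    {X : Type*} [MetricSpace X] [CompactSpace X] [Nonempty X]
    [MeasurableSpace X] [BorelSpace X]
    (T : X → X) (hT : Continuous T)
    (φ : ℕ → X → ℝ) (hφ : SubadditivePotential T φ)
    -- metric entropies: nonnegative, bounded (finite topological entropy), and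
    -- upper semi-continuous on the set of invariant measures
    (h : ProbabilityMeasure X → ℝ) (hh0 : ∀ μ, 0 ≤ h μ)
    (htop : ∃ H : ℝ, ∀ μ : ProbabilityMeasure X,
      Measure.map T (μ : Measure X) = (μ : Measure X) → h μ ≤ H)
    (husc : UpperSemicontinuousOn h
      {μ : ProbabilityMeasure X | Measure.map T (μ : Measure X) = (μ : Measure X)})
    -- Lyapunov exponents of invariant measures
    (χ : ProbabilityMeasure X → EReal)
    (hχ : ∀ μ : ProbabilityMeasure X, Measure.map T (μ : Measure X) = (μ : Measure X) →
      Tendsto (fun n : ℕ => eint (μ : Measure X) (fun x => elog (φ n x)) / (n : EReal))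
        atTop (𝓝 (χ μ)))
    -- β(Φ) > -∞
    (β : EReal) (hβne : β ≠ ⊥)
    (hβ : Tendsto (fun n : ℕ => elog (⨆ x, φ n x) / (n : EReal)) atTop (𝓝 β))
    -- the topological pressure, via the variational principle, and equilibrium states
    (P : ℝ → ℝ)
    (hP : ∀ t ∈ Set.Ioi (0 : ℝ), (P t : EReal) =
      sSup ((fun ν => (h ν : EReal) + (t : EReal) * χ ν) ''
        {ν : ProbabilityMeasure X | Measure.map T (ν : Measure X) = (ν : Measure X)}))
    (μt : ℝ → ProbabilityMeasure X)
    (hEq : ∀ t ∈ Set.Ioi (0 : ℝ),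
      Measure.map T (μt t : Measure X) = (μt t : Measure X) ∧
      (h (μt t) : EReal) + (t : EReal) * χ (μt t) = (P t : EReal))
    -- μ_inf is a weak-* accumulation point of (μ_t) as t → ∞
    (μ_inf : ProbabilityMeasure X) (hacc : MapClusterPt μ_inf atTop μt) :
    χ μ_inf = β := by
  obtain ⟨b, rfl, hpos, hb⟩ := beta_real hφ hβne hβ
  obtain ⟨ν, hνinv, hν⟩ := exists_maximizing hT hφ hpos hb
  have hχν : (b : EReal) ≤ χ ν := le_chi hφ (ν : Measure X) (hχ ν hνinv) hν
  obtain ⟨H, hH⟩ := htop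
  -- lower bound along the equilibrium states
  have hlow : ∀ t : ℝ, 0 < t → ∀ m : ℕ, 1 ≤ m → ∀ ε : ℝ, 0 < ε →
      m * (b - H / t) ≤ ∫ x, Real.log (max (φ m x) ε) ∂(μt t : Measure X) := by
    intro t ht m hm ε hε
    obtain ⟨hinv, heq⟩ := hEq t ht
    have hle := chi_le hT hφ (μt t : Measure X) hinv (hχ _ hinv) hm hε
    have hPt : ((t * b : ℝ) : EReal) ≤ (P t : EReal) := by
      rw [hP t ht]
      refine le_trans ?_ (le_sSup ⟨ν, hνinv, rfl⟩)
      have h1 : (t : EReal) * (b : EReal) ≤ (t : EReal) * χ ν :=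
        mul_le_mul_of_nonneg_left hχν (by exact_mod_cast ht.le)
      calc ((t * b : ℝ) : EReal) = 0 + (t : EReal) * (b : EReal) := by
            rw [zero_add, EReal.coe_mul]
        _ ≤ _ := add_le_add (by exact_mod_cast hh0 ν) h1
    have hbot : χ (μt t) ≠ ⊥ := by
      intro h0
      rw [h0, EReal.coe_mul_bot_of_pos ht, EReal.add_bot] at heq
      exact EReal.coe_ne_bot _ heq.symm
    have htop : χ (μt t) ≠ ⊤ := fun h0 => by
      rw [h0] at hle
      exact EReal.coe_ne_top _ (top_le_iff.1 hle)
    generalize χ (μt t) = c at *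
    lift c to ℝ using ⟨htop, hbot⟩
    rw [← heq] at hPt
    have hPt' : t * b ≤ h (μt t) + t * c := by exact_mod_cast hPt
    have hle' : c ≤ (∫ x, Real.log (max (φ m x) ε) ∂(μt t : Measure X)) / m := by
      exact_mod_cast hle
    have hm0 : (0 : ℝ) < m := by exact_mod_cast hm
    rw [le_div_iff₀ hm0] at hle'
    have h1 : b - H / t ≤ c := by
      rw [sub_le_iff_le_add, ← sub_le_iff_le_add', le_div_iff₀ ht]
      have := hH _ hinv
      nlinarith
    nlinarith
  -- an ultrafilter along which μt converges
  obtain ⟨U, hU, hUlim⟩ := mapClusterPt_iff_ultrafilter.1 hacc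
  have hIntg := ProbabilityMeasure.tendsto_iff_forall_integral_tendsto.1 hUlim
  have hpos_t : ∀ᶠ t in (U : Filter ℝ), 0 < t := hU (eventually_gt_atTop 0)
  have hinv_inf : Measure.map T (μ_inf : Measure X) = (μ_inf : Measure X) := by
    have : IsProbabilityMeasure (Measure.map T (μ_inf : Measure X)) :=
      Measure.isProbabilityMeasure_map hT.measurable.aemeasurable
    refine ext_of_forall_integral_eq_of_IsFiniteMeasure fun f => ?_
    rw [integral_map hT.measurable.aemeasurable f.continuous.measurable.aestronglyMeasurable]
    refine tendsto_nhds_unique (hIntg (f.compContinuous ⟨T, hT⟩)) ((hIntg f).congr' ?_)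
    filter_upwards [hpos_t] with t ht
    have := integral_iterate (μt t : Measure X) hT (hEq t ht).1 f.continuous 1
    simpa using this.symm
  apply le_antisymm
  · refine le_of_tendsto_of_tendsto (hχ μ_inf hinv_inf) hβ ?_
    filter_upwards [hpos, eventually_ge_atTop 1] with n hn hn1
    refine EReal.div_le_div_right_of_nonneg (by exact_mod_cast Nat.zero_le _) ?_
    rw [elog, ENNReal.log_ofReal_of_pos hn]
    have h1 := eint_le_of_le (μ_inf : Measure X) (f := fun x => elog (φ n x))
      (F := fun _ => Real.log (⨆ x, φ n x)) (integrable_const _) (fun x => by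
        apply elog_le_of_le_exp
        rw [Real.exp_log hn]
        exact le_ciSup (isCompact_range (hφ.1 n hn1)).bddAbove x)
    simpa using h1
  · refine le_chi hφ (μ_inf : Measure X) (hχ μ_inf hinv_inf) fun m hm ε hε => ?_
    have hgc := trunc_cont (hφ.1 m hm) hε
    have h1 : Tendsto (fun t : ℝ => m * (b - H / t)) U (𝓝 (m * (b - 0))) :=
      (((tendsto_const_nhds.div_atTop tendsto_id).const_sub b).const_mul (m : ℝ)).mono_left hU
    rw [sub_zero] at h1
    refine le_of_tendsto_of_tendsto h1
      (hIntg (BoundedContinuousFunction.mkOfCompact ⟨_, hgc⟩)) ?_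
    filter_upwards [hpos_t] with t ht
    exact hlow t ht m hm ε hε
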